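/- For every integer n ≥ 2, the q,t-derangement polynomial has the γ-expansion d_n(q,t) = Σ_{k=0}^{⌊(n−2)/2⌋} ξ⁰_{n,k}(q) · t^{k+1} (1+t)^{n−2−2k}, where ξ⁰_{n,k}(q) = Σ q^{maj(σ^{-1})}, the sum running over all permutations σ ∈ S_n whose descent set DES(σ) is a subset of {2,…,n−2} containing no two consecutive integers and has exactly k elements (i.e., σ has k descents, no double descents, no first descent, and no last descent). -/

import Mathlib

open Polynomial Finset

/-- `S` contains no two consecutive integers. -/
def NoTwoConsec (S : Finset ℕ) : Prop := ∀ i ∈ S, i + 1 ∉ S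

instance (S : Finset ℕ) : Decidable (NoTwoConsec S) :=
  inferInstanceAs (Decidable (∀ i ∈ S, i + 1 ∉ S))

/-- `σ(i)` in one-line notation, as a value in `{1, …, n}` for `i ∈ {1, …, n}`
(and `0` for out-of-range `i`). -/
def pval {n : ℕ} (σ : Equiv.Perm (Fin n)) (i : ℕ) : ℕ :=
  if h : 1 ≤ i ∧ i ≤ n then (σ ⟨i - 1, by omega⟩ : ℕ) + 1 else 0

/-- The descent set `DES(σ) = {i ∈ {1,…,n-1} : σ(i) > σ(i+1)}`. -/
def pDES {n : ℕ} (σ : Equiv.Perm (Fin n)) : Finset ℕ :=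
  (Finset.Icc 1 (n - 1)).filter fun i => pval σ (i + 1) < pval σ i

/-- The major index `maj(σ) = Σ_{i ∈ DES(σ)} i`. -/
def pmaj {n : ℕ} (σ : Equiv.Perm (Fin n)) : ℕ := ∑ i ∈ pDES σ, i

/-- The excedance number `exc(σ) = #{i : σ(i) > i}`. -/
def pexc {n : ℕ} (σ : Equiv.Perm (Fin n)) : ℕ :=
  ((Finset.Icc 1 n).filter fun i => i < pval σ i).card

/-- The inversion number `inv(σ) = #{(i,j) : 1 ≤ i < j ≤ n, σ(i) > σ(j)}`. -/
def pinv {n : ℕ} (σ : Equiv.Perm (Fin n)) : ℕ :=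
  (((Finset.Icc 1 n) ×ˢ (Finset.Icc 1 n)).filter
    fun p => p.1 < p.2 ∧ pval σ p.2 < pval σ p.1).card

/-- The `q,t`-derangement polynomial
`d_n(q,t) = Σ_{σ ∈ D_n} q^{maj(σ)-exc(σ)} t^{exc(σ)}`, as an element of
`ℤ[q][t]` (`q` is the inner variable, `t` the outer one). -/
noncomputable def dpoly (n : ℕ) : Polynomial (Polynomial ℤ) :=
  ∑ σ ∈ Finset.univ.filter (fun σ : Equiv.Perm (Fin n) => ∀ i, σ i ≠ i),
    Polynomial.C (Polynomial.X ^ (pmaj σ - pexc σ)) * Polynomial.X ^ pexc σ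

/-!
For a permutation `σ`, `maj σ - exc σ` is the sum of the descents of the word
`i ↦ (decide (σ i ≤ i), σ i)` in lexicographic order, that is, of the word of `σ` read in the
alphabet that puts the values at excedances first. So it suffices to prove, for every weight `φ` on
finite sets of positions, that summing `φ` of this descent set times `t ^ exc σ` over derangements
gives the same as summing `φ (DES w⁻¹)` times the γ-weight of `DES w` over all permutations `w`.
By Möbius inversion the condition on the descent sets may be weakened from equality with `S` to
inclusion in `S`. A permutation `w` with `DES w⁻¹ ⊆ S` is the standardization of a word whose
content is prescribed by `S`, and similarly a derangement becomes a word of the same content with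
marked letters. In commuting variables `x₁, …, x_r`, the generating series of the words on either
side is the inverse of `1 - ∑_{k ≥ 2} t [k-1]_t h_k(x)`: for the γ-weighted words one strips off
weakly increasing prefixes, and for derangements one eliminates the variables one at a time.
-/

namespace DerangementGamma

section GeometricSeries

variable {R S : Type*} [CommRing R] [CommRing S]

/-- The geometric series `1 / (1 - b z)`. -/
noncomputable def geomSeries (b : R) : PowerSeries R := PowerSeries.mk (b ^ ·)

lemma geomSeries_eq (b : R) :
    geomSeries b = 1 + PowerSeries.C b * PowerSeries.X * geomSeries b := by
  ext k
  cases k <;> simp [geomSeries, mul_assoc, PowerSeries.coeff_succ_X_mul, pow_succ',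
    PowerSeries.coeff_one]

lemma map_geomSeries (φ : R →+* S) (b : R) :
    PowerSeries.map φ (geomSeries b) = geomSeries (φ b) := by
  ext k
  simp [geomSeries]

lemma coeff_linear_pow_mul (y b : R) (k : ℕ) (p : R[X]) :
    ((C y + C b * X) ^ k * p).coeff k = PowerSeries.coeff k (geomSeries b *
      p.eval₂ PowerSeries.C (PowerSeries.C y * PowerSeries.X * geomSeries b)) := by
  induction k generalizing p with
  | zero =>
    simp [geomSeries, hom_eval₂, coeff_zero_eq_eval_zero]
  | succ k ih =>
    have h_top : ((C y + C b * X : R[X]) ^ (k + 1)).coeff (k + 1) = b ^ (k + 1) := by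
      have h_deg : (C y + C b * X).natDegree ≤ 1 := by compute_degree
      simpa [coeff_C] using coeff_pow_of_natDegree_le (m := k + 1) h_deg
    have h_left : (C y + C b * X) ^ (k + 1) * p =
        X * ((C y + C b * X) ^ k * ((C y + C b * X) * p.divX)) +
          C (p.coeff 0) * (C y + C b * X) ^ (k + 1) := by
      nth_rw 1 [← X_mul_divX_add p]
      ring
    set w := PowerSeries.C y * PowerSeries.X * geomSeries b with hw
    have h_right : geomSeries b * p.eval₂ PowerSeries.C w =
        PowerSeries.X * (geomSeries b * ((C y + C b * X) * p.divX).eval₂ PowerSeries.C w) +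
          PowerSeries.C (p.coeff 0) * geomSeries b := by
      nth_rw 1 [← X_mul_divX_add p]
      simp only [eval₂_add, eval₂_mul, eval₂_X, eval₂_C]
      linear_combination (norm := (rw [hw]; ring)) PowerSeries.C y * PowerSeries.X * geomSeries b *
        p.divX.eval₂ PowerSeries.C w * geomSeries_eq b
    rw [h_left, h_right, coeff_add, coeff_X_mul, ih, coeff_C_mul, h_top, map_add,
      PowerSeries.coeff_succ_X_mul, PowerSeries.coeff_C_mul]
    simp [geomSeries]

end GeometricSeries

section Block

variable {R S : Type*} [CommRing R] [CommRing S]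

/-- The product of `y + (e i) x` over a totally ordered set of `k` positions `i`, where `e i` is
`1` at the least position, `t` at the greatest one, `1 + t` in between, and `0` when `k = 1`. -/
def block (t x y : R) : ℕ → R
  | 0 => 1
  | 1 => y
  | k + 2 => (y + x) * (y + (1 + t) * x) ^ k * (y + t * x)

lemma map_block (φ : R →+* S) (t x y : R) (k : ℕ) :
    φ (block t x y k) = block (φ t) (φ x) (φ y) k := by
  rcases k with - | - | k <;> simp [block]

/-- The factor `(1 - z) (1 - t z) / (1 - (1 + t + u) z)` that the blocks of the smallest letter
contribute to the generating function. -/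
noncomputable def blockKernel (t u : R) : PowerSeries R :=
  (1 - PowerSeries.X) * (1 - PowerSeries.C t * PowerSeries.X) * geomSeries (1 + t + u)

lemma coeff_block_mul (t u y : R) (k : ℕ) (p : R[X]) :
    (block (C t) X (C y + C u * X) k * p).coeff k = PowerSeries.coeff k (blockKernel t u *
      p.eval₂ PowerSeries.C (PowerSeries.C y * PowerSeries.X * geomSeries (1 + t + u))) := by
  have h_pow (j : ℕ) := coeff_linear_pow_mul y (1 + t + u) j p
  set L : R[X] := C y + C (1 + t + u) * X with hL
  set G := geomSeries (1 + t + u) *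
    p.eval₂ PowerSeries.C (PowerSeries.C y * PowerSeries.X * geomSeries (1 + t + u)) with hG
  have h_kernel : blockKernel t u *
      p.eval₂ PowerSeries.C (PowerSeries.C y * PowerSeries.X * geomSeries (1 + t + u)) =
        G - PowerSeries.X * (PowerSeries.C (1 + t) * G) +
          PowerSeries.X * (PowerSeries.X * (PowerSeries.C t * G)) := by
    simp only [hG, blockKernel, map_add, map_one]
    ring
  rw [h_kernel]
  rcases k with - | - | k
  · simpa [block] using h_pow 0
  · have h_block : block (C t) X (C y + C u * X) 1 * p =
        L ^ 1 * p - X * (C (1 + t) * (L ^ 0 * p)) := by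
      simp only [block, hL, map_add, map_one]
      ring
    rw [h_block, coeff_sub, coeff_X_mul, coeff_C_mul, h_pow, h_pow, map_add, map_sub,
      PowerSeries.coeff_succ_X_mul, PowerSeries.coeff_succ_X_mul, PowerSeries.coeff_zero_X_mul,
      PowerSeries.coeff_C_mul, add_zero]
  · have h_block : block (C t) X (C y + C u * X) (k + 2) * p =
        L ^ (k + 2) * p - X * (C (1 + t) * (L ^ (k + 1) * p)) + X * (X * (C t * (L ^ k * p))) := by
      simp only [block, hL, map_add, map_one]
      ring
    simp only [h_block, coeff_add, coeff_sub, coeff_X_mul, coeff_C_mul, h_pow, map_add _ (_ - _),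
      map_sub, PowerSeries.coeff_succ_X_mul, PowerSeries.coeff_C_mul]

end Block

section DenomCoeff

variable {R S : Type*} [CommRing R] [CommRing S]

/-- The sequence `1, -u, -t - u - t u, …` with characteristic polynomial `(X - 1) (X - t)`: the
coefficient of the complete homogeneous symmetric function `h k` in the denominator of the
generating functions below. -/
def denomCoeff (t u : R) : ℕ → R
  | 0 => 1
  | 1 => -u
  | k + 2 => (1 + t) * denomCoeff t u (k + 1) - t * denomCoeff t u k

/-- The generating function of `denomCoeff t u (k + ·)`. -/
noncomputable def shiftedDenom (t u : R) (k : ℕ) : PowerSeries R :=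
  PowerSeries.mk fun i => denomCoeff t u (k + i)

/-- The value of the parameter `u` that is left for the remaining letters once the smallest letter
has been summed out. -/
noncomputable def nextParam (t u : R) : PowerSeries R :=
  PowerSeries.C u + PowerSeries.C ((t + u) * (1 + u)) * PowerSeries.X * geomSeries (1 + t + u)

lemma shiftedDenom_mul (t u : R) (k : ℕ) :
    (1 - PowerSeries.X) * (1 - PowerSeries.C t * PowerSeries.X) * shiftedDenom t u k =
      PowerSeries.C (denomCoeff t u k) + PowerSeries.C (denomCoeff t u (k + 1) -
        (1 + t) * denomCoeff t u k) * PowerSeries.X := by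
  have h_expand : (1 - PowerSeries.X) * (1 - PowerSeries.C t * PowerSeries.X) * shiftedDenom t u k =
      shiftedDenom t u k - PowerSeries.X * (PowerSeries.C (1 + t) * shiftedDenom t u k) +
        PowerSeries.X * (PowerSeries.X * (PowerSeries.C t * shiftedDenom t u k)) := by
    simp only [map_add, map_one]
    ring
  rw [h_expand]
  ext i
  have h_rec (j : ℕ) : denomCoeff t u (k + (j + 2)) =
      (1 + t) * denomCoeff t u (k + (j + 1)) - t * denomCoeff t u (k + j) := rfl
  rcases i with - | - | i
  · simp [shiftedDenom]
  · simp [shiftedDenom, PowerSeries.coeff_succ_X_mul]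
  · simp [shiftedDenom, PowerSeries.coeff_succ_X_mul, h_rec, add_mul, add_assoc]

lemma blockKernel_mul_shiftedDenom (t u : R) (k : ℕ) :
    blockKernel t u * shiftedDenom t u k = denomCoeff (PowerSeries.C t) (nextParam t u) k := by
  have h_geom := geomSeries_eq (1 + t + u)
  have h_comm (k : ℕ) : blockKernel t u * shiftedDenom t u k = geomSeries (1 + t + u) *
      ((1 - PowerSeries.X) * (1 - PowerSeries.C t * PowerSeries.X) * shiftedDenom t u k) := by
    rw [blockKernel]
    ring
  induction k using Nat.twoStepInduction with
  | zero =>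
    rw [h_comm, shiftedDenom_mul]
    simp only [denomCoeff, map_add, map_sub, map_mul, map_neg, map_one] at h_geom ⊢
    linear_combination h_geom
  | one =>
    rw [h_comm, shiftedDenom_mul]
    simp only [denomCoeff, nextParam, map_add, map_sub, map_mul, map_neg, map_one] at h_geom ⊢
    linear_combination -PowerSeries.C u * h_geom
  | more k ih ih' =>
    have h_shift : shiftedDenom t u (k + 2) =
        (1 + PowerSeries.C t) * shiftedDenom t u (k + 1) -
          PowerSeries.C t * shiftedDenom t u k := by
      ext i
      have h_rec : denomCoeff t u (k + i + 2) =
          (1 + t) * denomCoeff t u (k + i + 1) - t * denomCoeff t u (k + i) := rfl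
      simp [shiftedDenom, add_mul, add_right_comm, h_rec]
    rw [h_shift, denomCoeff, ← ih, ← ih']
    ring

end DenomCoeff

section BlockProduct

variable {A : Type*} [CommRing A] {r : ℕ}

/-- The linear form in which `X c` has coefficient `t + u`, `u` or `1 + u` according to whether
`c < a`, `c = a` or `a < c`. -/
noncomputable def linForm (t u : A) (a : Fin r) : MvPolynomial (Fin r) A :=
  ∑ c, MvPolynomial.C (u + if c < a then t else if a < c then 1 else 0) * MvPolynomial.X c

/-- The product of the blocks of sizes `d a` with base points `linForm t u a`. -/
noncomputable def blockProd (t u : A) (d : Fin r →₀ ℕ) : MvPolynomial (Fin r) A :=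
  ∏ a, block (MvPolynomial.C t) (MvPolynomial.X a) (linForm t u a) (d a)

/-- The image of the factors `a.succ` of `blockProd t u (Finsupp.cons k d)` under `finSuccEquiv`. -/
noncomputable def blockProdTail (t u : A) (d : Fin r →₀ ℕ) : (MvPolynomial (Fin r) A)[X] :=
  ∏ a, block (C (MvPolynomial.C t)) (C (MvPolynomial.X a))
    (C (linForm t u a) + C (MvPolynomial.C (t + u)) * X) (d a)

lemma finSuccEquiv_C (a : A) :
    MvPolynomial.finSuccEquiv A r (MvPolynomial.C a) = C (MvPolynomial.C a) :=
  (MvPolynomial.finSuccEquiv A r).commutes a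

lemma finSuccEquiv_linForm_zero (t u : A) :
    MvPolynomial.finSuccEquiv A r (linForm t u 0) =
      C (MvPolynomial.C (1 + u) * ∑ c, MvPolynomial.X c) + C (MvPolynomial.C u) * X := by
  simp [linForm, Fin.sum_univ_succ, finSuccEquiv_C, mul_sum, add_comm,
    MvPolynomial.finSuccEquiv_X_zero, MvPolynomial.finSuccEquiv_X_succ]

lemma finSuccEquiv_linForm_succ (t u : A) (a : Fin r) :
    MvPolynomial.finSuccEquiv A r (linForm t u a.succ) =
      C (linForm t u a) + C (MvPolynomial.C (t + u)) * X := by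
  simp only [linForm, Fin.sum_univ_succ, map_add, map_sum, map_mul, finSuccEquiv_C,
    MvPolynomial.finSuccEquiv_X_zero, MvPolynomial.finSuccEquiv_X_succ, Fin.succ_lt_succ_iff,
    Fin.succ_pos, if_true]
  ring

lemma finSuccEquiv_blockProd_cons (t u : A) (k : ℕ) (d : Fin r →₀ ℕ) :
    MvPolynomial.finSuccEquiv A r (blockProd t u (Finsupp.cons k d)) =
      block (C (MvPolynomial.C t)) X
        (C (MvPolynomial.C (1 + u) * ∑ c, MvPolynomial.X c) + C (MvPolynomial.C u) * X) k *
      blockProdTail t u d := by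
  have h_block (t x y : MvPolynomial (Fin (r + 1)) A) (k : ℕ) :
      MvPolynomial.finSuccEquiv A r (block t x y k) = block (MvPolynomial.finSuccEquiv A r t)
        (MvPolynomial.finSuccEquiv A r x) (MvPolynomial.finSuccEquiv A r y) k :=
    map_block (MvPolynomial.finSuccEquiv A r : _ →+* (MvPolynomial (Fin r) A)[X]) t x y k
  simp only [blockProd, blockProdTail, Fin.prod_univ_succ, map_mul, map_prod, h_block,
    finSuccEquiv_C, finSuccEquiv_linForm_zero, finSuccEquiv_linForm_succ,
    MvPolynomial.finSuccEquiv_X_zero, MvPolynomial.finSuccEquiv_X_succ, Finsupp.cons_zero,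
    Finsupp.cons_succ]

end BlockProduct

section SwapSeries

variable {A σ : Type*} [CommRing A]

/-- A polynomial with power series coefficients, read as a power series with polynomial
coefficients. -/
noncomputable def swapSeries : MvPolynomial σ (PowerSeries A) →+* PowerSeries (MvPolynomial σ A) :=
  MvPolynomial.eval₂Hom (PowerSeries.map MvPolynomial.C) fun i => PowerSeries.C (MvPolynomial.X i)

lemma swapSeries_C (f : PowerSeries A) :
    swapSeries (MvPolynomial.C f : MvPolynomial σ _) = PowerSeries.map MvPolynomial.C f := by
  simp [swapSeries]

lemma swapSeries_X (i : σ) :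
    swapSeries (MvPolynomial.X i : MvPolynomial σ (PowerSeries A)) =
      PowerSeries.C (MvPolynomial.X i) := by
  simp [swapSeries]

lemma coeff_coeff_swapSeries (p : MvPolynomial σ (PowerSeries A)) (k : ℕ) (d : σ →₀ ℕ) :
    (PowerSeries.coeff k (swapSeries p)).coeff d = PowerSeries.coeff k (p.coeff d) := by
  classical
  induction p using MvPolynomial.induction_on' with
  | monomial m f =>
    have h_monomial : swapSeries (MvPolynomial.monomial m f) =
        PowerSeries.map MvPolynomial.C f * PowerSeries.C (MvPolynomial.monomial m (1 : A)) := by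
      rw [swapSeries, MvPolynomial.coe_eval₂Hom, MvPolynomial.eval₂_monomial]
      simp only [MvPolynomial.monomial_eq (s := m) (a := (1 : A)), map_one, one_mul,
        map_finsuppProd, map_pow]
    rw [h_monomial, PowerSeries.coeff_mul_C, PowerSeries.coeff_map, MvPolynomial.coeff_C_mul,
      MvPolynomial.coeff_monomial, MvPolynomial.coeff_monomial]
    split_ifs <;> simp
  | add p q hp hq => simp [hp, hq]

end SwapSeries

section BlockProductRecursion

variable {A : Type*} [CommRing A] {r : ℕ}

lemma swapSeries_linForm_nextParam (t u : A) (a : Fin r) :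
    swapSeries (linForm (PowerSeries.C t) (nextParam t u) a) =
      PowerSeries.C (linForm t u a) + PowerSeries.C (MvPolynomial.C (t + u)) *
        (PowerSeries.C (MvPolynomial.C (1 + u) * ∑ c, MvPolynomial.X c) * PowerSeries.X *
          geomSeries (1 + MvPolynomial.C t + MvPolynomial.C u)) := by
  simp only [linForm, nextParam, map_sum, map_mul, map_add, swapSeries_C, swapSeries_X, mul_sum,
    sum_mul, ← sum_add_distrib, map_geomSeries, PowerSeries.map_C, PowerSeries.map_X, map_one]
  refine sum_congr rfl fun c _ => ?_
  split_ifs <;> simp only [PowerSeries.map_C, map_one, map_zero] <;> ring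

lemma swapSeries_blockProd_nextParam (t u : A) (d : Fin r →₀ ℕ) :
    swapSeries (blockProd (PowerSeries.C t) (nextParam t u) d) =
      (blockProdTail t u d).eval₂ PowerSeries.C
        (PowerSeries.C (MvPolynomial.C (1 + u) * ∑ c, MvPolynomial.X c) * PowerSeries.X *
          geomSeries (1 + MvPolynomial.C t + MvPolynomial.C u)) := by
  rw [blockProd, blockProdTail, ← coe_eval₂RingHom, map_prod, map_prod]
  refine prod_congr rfl fun a _ => ?_
  simp only [map_block, swapSeries_linForm_nextParam, swapSeries_C, swapSeries_X, PowerSeries.map_C,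
    coe_eval₂RingHom, eval₂_add, eval₂_mul, eval₂_C, eval₂_X]

lemma mk_coeff_blockProd_cons (t u : A) (d : Fin r →₀ ℕ) :
    PowerSeries.mk (fun k => (blockProd t u (Finsupp.cons k d)).coeff (Finsupp.cons k d)) =
      blockKernel t u * (blockProd (PowerSeries.C t) (nextParam t u) d).coeff d := by
  have h_kernel : swapSeries (MvPolynomial.C (blockKernel t u) : MvPolynomial (Fin r) _) =
      blockKernel (MvPolynomial.C t) (MvPolynomial.C u) := by
    simp [swapSeries_C, blockKernel, map_geomSeries]
  ext k
  rw [PowerSeries.coeff_mk, ← MvPolynomial.finSuccEquiv_coeff_coeff, finSuccEquiv_blockProd_cons,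
    coeff_block_mul, ← swapSeries_blockProd_nextParam, ← h_kernel, ← map_mul,
    coeff_coeff_swapSeries, MvPolynomial.coeff_C_mul]

end BlockProductRecursion

section GeneratingFunctions

variable {A : Type*} [CommRing A] {r : ℕ}

/-- The generating function whose value at `u = 0` counts derangements with prescribed positions of
the descents of `excKey` by excedances (`sum_derangements_strictMonoOnFibers`). The parameter `u`
is needed for the recursion on the number of variables. -/
noncomputable def derangementSeries (t u : A) (r : ℕ) : MvPowerSeries (Fin r) A :=
  fun d => (blockProd t u d).coeff d

/-- `∑ k, denomCoeff t u k * h k`, with `h k` the complete homogeneous symmetric function. -/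
noncomputable def denomSeries (t u : A) (σ : Type*) : MvPowerSeries σ A :=
  fun d => denomCoeff t u d.degree

lemma coeff_derangementSeries (t u : A) (d : Fin r →₀ ℕ) :
    (derangementSeries t u r).coeff d = (blockProd t u d).coeff d := rfl

lemma coeff_denomSeries {σ : Type*} (t u : A) (d : σ →₀ ℕ) :
    (denomSeries t u σ).coeff d = denomCoeff t u d.degree := rfl

lemma sum_antidiagonal_cons {M : Type*} [AddCommMonoid M] (k : ℕ) (d : Fin r →₀ ℕ)
    (f : (Fin (r + 1) →₀ ℕ) × (Fin (r + 1) →₀ ℕ) → M) :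
    ∑ p ∈ antidiagonal (Finsupp.cons k d), f p =
      ∑ b ∈ antidiagonal d, ∑ a ∈ antidiagonal k,
        f (Finsupp.cons a.1 b.1, Finsupp.cons a.2 b.2) := by
  rw [← sum_product']
  refine sum_nbij' (fun p => ((p.1.tail, p.2.tail), (p.1 0, p.2 0)))
    (fun q => (Finsupp.cons q.2.1 q.1.1, Finsupp.cons q.2.2 q.1.2)) ?_ ?_ ?_ ?_ ?_
  all_goals simp +contextual [Finsupp.ext_iff, Fin.forall_fin_succ, Finsupp.tail_apply]

theorem derangementSeries_mul_denomSeries (t u : A) (r : ℕ) :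
    derangementSeries t u r * denomSeries t u (Fin r) = 1 := by
  induction r generalizing A with
  | zero =>
    ext d
    obtain rfl : d = 0 := Subsingleton.elim _ _
    simp [MvPowerSeries.coeff_mul, coeff_derangementSeries, coeff_denomSeries, blockProd,
      denomCoeff]
  | succ r ih =>
    ext d
    rw [← Finsupp.cons_tail d]
    generalize d 0 = k, d.tail = d'
    have h_sum : ∀ b ∈ antidiagonal d', ∑ a ∈ antidiagonal k,
        (derangementSeries t u (r + 1)).coeff (Finsupp.cons a.1 b.1) *
          (denomSeries t u (Fin (r + 1))).coeff (Finsupp.cons a.2 b.2) =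
        PowerSeries.coeff k ((derangementSeries (PowerSeries.C t) (nextParam t u) r).coeff b.1 *
          (denomSeries (PowerSeries.C t) (nextParam t u) (Fin r)).coeff b.2) := by
      intro b _
      simp only [coeff_derangementSeries, coeff_denomSeries]
      rw [← blockKernel_mul_shiftedDenom, mul_left_comm, ← mul_assoc, ← mk_coeff_blockProd_cons,
        PowerSeries.coeff_mul]
      refine sum_congr rfl fun a _ => ?_
      simp [shiftedDenom, Finsupp.degree_eq_sum, Fin.sum_univ_succ, add_comm]
    rw [MvPowerSeries.coeff_mul, sum_antidiagonal_cons, sum_congr rfl h_sum, ← map_sum,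
      ← MvPowerSeries.coeff_mul, ih, MvPowerSeries.coeff_one, MvPowerSeries.coeff_one]
    have h_zero : Finsupp.cons k d' = 0 ↔ k = 0 ∧ d' = 0 := by
      simp [Finsupp.ext_iff, Fin.forall_fin_succ]
    simp only [h_zero, PowerSeries.coeff_one, apply_ite (PowerSeries.coeff k), map_zero, ite_and]
    split_ifs <;> rfl

end GeneratingFunctions

section Words

variable {α A : Type*} [LinearOrder α] [CommRing A]

/-- The number of occurrences of each letter in a word. -/
noncomputable def content (l : List α) : α →₀ ℕ := Multiset.toFinsupp (l : Multiset α)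

/-- The words in which each letter `a` occurs `d a` times. -/
noncomputable def words (d : α →₀ ℕ) : Finset (List α) := (Finsupp.toMultiset d).lists.toFinset

/-- The product over the maximal weakly increasing runs of a word of `t * (1 + t) ^ (k - 2)` for
each run of length `k ≥ 2`, and of `0` for each run of length `1`. -/
def runWeight (t : A) : List α → A
  | [] => 1
  | [_] => 0
  | [x, y] => if x ≤ y then t else 0
  | x :: y :: z :: l =>
    if x ≤ y then
      if y ≤ z then (1 + t) * runWeight t (y :: z :: l) else t * runWeight t (z :: l)
    else 0

/-- The generating function of words by content, weighted by `runWeight`. -/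
noncomputable def wordSeries (t : A) (α : Type*) [LinearOrder α] : MvPowerSeries α A :=
  fun d => ∑ l ∈ words d, runWeight t l

lemma coeff_wordSeries (t : A) (d : α →₀ ℕ) :
    (wordSeries t α).coeff d = ∑ l ∈ words d, runWeight t l := rfl

lemma mem_words {l : List α} {d : α →₀ ℕ} : l ∈ words d ↔ content l = d := by
  rw [words, Multiset.mem_toFinset, Multiset.mem_lists_iff, Multiset.quot_mk_to_coe, content,
    Multiset.toFinsupp_eq_iff, eq_comm]

lemma content_append (l l' : List α) : content (l ++ l') = content l + content l' := by
  simp [content, ← Multiset.coe_add]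

lemma content_eq_content_iff {l l' : List α} : content l = content l' ↔ l.Perm l' := by
  simp [content]

lemma degree_content (l : List α) : (content l).degree = l.length := by
  rw [content, ← Multiset.coe_card, ← Multiset.toFinsupp_sum_eq]
  rfl

/-- The increasing word with content `d`. -/
noncomputable def sortedWord (d : α →₀ ℕ) : List α := (Finsupp.toMultiset d).sort

lemma isChain_sortedWord (d : α →₀ ℕ) : (sortedWord d).IsChain (· ≤ ·) :=
  (Multiset.pairwise_sort _ _).isChain

lemma content_sortedWord (d : α →₀ ℕ) : content (sortedWord d) = d := by
  simp [content, sortedWord]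

lemma length_sortedWord (d : α →₀ ℕ) : (sortedWord d).length = d.degree := by
  rw [← degree_content, content_sortedWord]

lemma sortedWord_content {l : List α} (hl : l.IsChain (· ≤ ·)) : sortedWord (content l) = l :=
  (content_eq_content_iff.1 (content_sortedWord _)).eq_of_pairwise'
    (Multiset.pairwise_sort _ _) hl.pairwise

/-- The sum of `denomCoeff t 0 (i + j) * runWeight t l₂` over all splittings `l = l₁ ++ l₂` with
`x :: l₁` increasing, where `j` is the length of `l₁`. -/
def splitSum (t : A) (i : ℕ) (x : α) (l : List α) : A :=
  ∑ j ∈ range (l.length + 1),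
    if (x :: l.take j).IsChain (· ≤ ·) then denomCoeff t 0 (i + j) * runWeight t (l.drop j) else 0

lemma splitSum_cons (t : A) (i : ℕ) (x y : α) (l : List α) :
    splitSum t i x (y :: l) = denomCoeff t 0 i * runWeight t (y :: l) +
      if x ≤ y then splitSum t (i + 1) y l else 0 := by
  rw [splitSum, List.length_cons, sum_range_succ']
  simp [splitSum, ite_and, add_comm, add_left_comm]

lemma splitSum_add_two (t : A) (i : ℕ) (x : α) (l : List α) :
    splitSum t (i + 2) x l = (1 + t) * splitSum t (i + 1) x l - t * splitSum t i x l := by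
  simp only [splitSum, mul_sum, ← sum_sub_distrib]
  refine sum_congr rfl fun j _ => ?_
  have h_rec : denomCoeff t 0 (i + 2 + j) =
      (1 + t) * denomCoeff t 0 (i + 1 + j) - t * denomCoeff t 0 (i + j) := by
    rw [add_right_comm, add_right_comm i 1]
    rfl
  rw [h_rec]
  split_ifs <;> ring

lemma runWeight_cons_cons (t : A) (x y : α) (l : List α) :
    runWeight t (x :: y :: l) = if x ≤ y then runWeight t (y :: y :: l) else 0 := by
  cases l <;> simp [runWeight]

lemma splitSum_one_two (t : A) (x : α) (l : List α) :
    splitSum t 1 x l = -runWeight t (x :: l) ∧ splitSum t 2 x l = -runWeight t (x :: x :: l) := by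
  induction l generalizing x with
  | nil => simp [splitSum, runWeight, denomCoeff]
  | cons y l ih =>
    obtain ⟨ih_one, ih_two⟩ := ih y
    have h_one : splitSum t 1 x (y :: l) = -runWeight t (x :: y :: l) := by
      rw [splitSum_cons, ih_two, runWeight_cons_cons t x]
      split_ifs <;> simp [denomCoeff]
    have h_two : splitSum t 2 x (y :: l) = -runWeight t (x :: x :: y :: l) := by
      rw [splitSum_cons, splitSum_add_two, ih_one, ih_two, runWeight, if_pos le_rfl,
        runWeight_cons_cons t x]
      split_ifs <;> simp [denomCoeff]
    exact ⟨h_one, h_two⟩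

lemma sum_denomCoeff_mul_runWeight_drop (t : A) (l : List α) :
    ∑ j ∈ range (l.length + 1),
      (if (l.take j).IsChain (· ≤ ·) then denomCoeff t 0 j * runWeight t (l.drop j) else 0) =
      if l = [] then 1 else 0 := by
  cases l with
  | nil => simp [denomCoeff, runWeight]
  | cons x l =>
    have h_split := (splitSum_one_two t x l).1
    simp only [splitSum, add_comm 1] at h_split
    rw [List.length_cons, sum_range_succ']
    simp only [List.take_succ_cons, List.drop_succ_cons, h_split]
    simp [denomCoeff]

lemma denomSeries_mul_wordSeries (t : A) : denomSeries t 0 α * wordSeries t α = 1 := by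
  ext d
  simp only [MvPowerSeries.coeff_mul, coeff_denomSeries, coeff_wordSeries]
  calc ∑ p ∈ antidiagonal d, denomCoeff t 0 p.1.degree * ∑ l ∈ words p.2, runWeight t l
    _ = ∑ l ∈ words d, ∑ j ∈ range (l.length + 1) with (l.take j).IsChain (· ≤ ·),
          denomCoeff t 0 j * runWeight t (l.drop j) := by
      simp only [mul_sum]
      rw [sum_sigma', sum_sigma']
      refine sum_bij' (fun x _ => ⟨sortedWord x.1.1 ++ x.2, x.1.1.degree⟩)
        (fun y _ => ⟨(content (y.1.take y.2), content (y.1.drop y.2)), y.1.drop y.2⟩)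
        ?_ ?_ ?_ ?_ ?_
      · rintro ⟨⟨a, b⟩, l⟩ h
        simp only [mem_sigma, HasAntidiagonal.mem_antidiagonal, mem_words] at h
        simp [mem_words, content_append, content_sortedWord, length_sortedWord, h,
          isChain_sortedWord, List.take_left']
      · rintro ⟨l, j⟩ h
        simp_all [mem_words, ← content_append]
      · rintro ⟨⟨a, b⟩, l⟩ h
        simp only [mem_sigma, HasAntidiagonal.mem_antidiagonal, mem_words] at h
        simp [List.take_left', List.drop_left', length_sortedWord, content_sortedWord, h]
      · rintro ⟨l, j⟩ h
        simp only [mem_sigma, mem_filter, mem_range] at h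
        simp [sortedWord_content h.2.2, degree_content]
        omega
      · rintro ⟨⟨a, b⟩, l⟩ _
        simp [List.drop_left', length_sortedWord]
    _ = MvPowerSeries.coeff d 1 := by
      have h_nil : [] ∈ words d ↔ d = 0 := by simp [mem_words, content, eq_comm]
      simp [sum_filter, sum_denomCoeff_mul_runWeight_drop, MvPowerSeries.coeff_one, h_nil]

theorem wordSeries_eq_derangementSeries (t : A) (r : ℕ) :
    wordSeries t (Fin r) = derangementSeries t 0 r :=
  (left_inv_eq_right_inv (derangementSeries_mul_denomSeries t 0 r)
    (denomSeries_mul_wordSeries t)).symm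

end Words

section Descents

variable {α : Type*} [LinearOrder α] {m : ℕ}

/-- The descent set of a word of length `m + 1`, with positions counted from `1`. -/
def descents (f : Fin (m + 1) → α) : Finset ℕ :=
  image (fun k : Fin m => (k : ℕ) + 1) {k : Fin m | f k.succ < f k.castSucc}

lemma zero_notMem_descents (f : Fin (m + 1) → α) : 0 ∉ descents f := by
  simp [descents]

lemma succ_mem_descents_iff {f : Fin (m + 1) → α} {i : ℕ} :
    i + 1 ∈ descents f ↔ ∃ h : i < m, f ⟨i + 1, by omega⟩ < f ⟨i, by omega⟩ := by
  simp only [descents, mem_image, mem_filter_univ, Fin.exists_iff, Nat.add_right_cancel_iff]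
  constructor
  · rintro ⟨i, hi, h, rfl⟩
    exact ⟨hi, h⟩
  · rintro ⟨hi, h⟩
    exact ⟨i, hi, h, rfl⟩

lemma one_mem_descents_iff {f : Fin (m + 2) → α} : 1 ∈ descents f ↔ f 1 < f 0 := by
  simp [succ_mem_descents_iff (i := 0)]

lemma image_succ_descents_tail (f : Fin (m + 2) → α) :
    (descents (Fin.tail f)).image (· + 1) = (descents f).erase 1 := by
  ext i
  rcases i with - | - | i
  · simp [zero_notMem_descents]
  · simp [zero_notMem_descents]
  · simp [succ_mem_descents_iff, Fin.tail]

lemma descents_eq_image_succ {f : Fin (m + 2) → α} (h : f 0 ≤ f 1) :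
    descents f = (descents (Fin.tail f)).image (· + 1) := by
  rw [image_succ_descents_tail, erase_eq_of_notMem]
  exact one_mem_descents_iff.not.2 h.not_gt

lemma descents_eq_insert_two {f : Fin (m + 3) → α} (h : f 0 ≤ f 1) (h' : f 2 < f 1) :
    descents f = insert 2 ((descents (Fin.tail (Fin.tail f))).image (· + 2)) := by
  have h_one : 1 ∈ descents (Fin.tail f) := one_mem_descents_iff.2 h'
  rw [descents_eq_image_succ h, ← insert_erase h_one, ← image_succ_descents_tail, image_insert,
    image_image]
  rfl

end Descents

section GammaWeight

variable {α A : Type*} [LinearOrder α] [CommRing A]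

lemma two_mul_card_le_of_noTwoConsec {K : Finset ℕ} {m : ℕ} (hK : K ⊆ Icc 2 m)
    (hK' : NoTwoConsec K) : 2 * #K ≤ m := by
  have h_disj : Disjoint K (K.image (· + 1)) := by
    simp only [disjoint_right, forall_mem_image]
    exact hK'
  have h_sub : K ∪ K.image (· + 1) ⊆ Icc 2 (m + 1) := by
    refine union_subset (hK.trans (Icc_subset_Icc_right m.le_succ)) (image_subset_iff.2 ?_)
    grind
  have h_card := card_le_card h_sub
  rw [card_union_of_disjoint h_disj, card_image_of_injective _ (add_left_injective 1),
    Nat.card_Icc] at h_card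
  omega

/-- The contribution to the γ-expansion of a permutation of `m + 2` letters with descent set `K`. -/
def gammaWeight (t : A) (m : ℕ) (K : Finset ℕ) : A :=
  if K ⊆ Icc 2 m ∧ NoTwoConsec K then t ^ (#K + 1) * (1 + t) ^ (m - 2 * #K) else 0

lemma gammaWeight_eq_zero (t : A) {m i : ℕ} {K : Finset ℕ} (h : i ∈ K) (hi : i ∉ Icc 2 m) :
    gammaWeight t m K = 0 :=
  if_neg fun hK => hi (hK.1 h)

lemma gammaWeight_image_succ (t : A) (m : ℕ) {K : Finset ℕ} (h : 1 ∉ K) :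
    gammaWeight t (m + 1) (K.image (· + 1)) = (1 + t) * gammaWeight t m K := by
  have h_cond : (K.image (· + 1) ⊆ Icc 2 (m + 1) ∧ NoTwoConsec (K.image (· + 1))) ↔
      K ⊆ Icc 2 m ∧ NoTwoConsec K := by
    simp only [NoTwoConsec, forall_mem_image, subset_iff]
    grind
  simp only [gammaWeight, h_cond, card_image_of_injective _ (add_left_injective 1)]
  split_ifs with hK
  · rw [Nat.sub_add_comm (two_mul_card_le_of_noTwoConsec hK.1 hK.2)]
    ring
  · simp

lemma gammaWeight_insert_two (t : A) (m : ℕ) {K : Finset ℕ} (h : 0 ∉ K) :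
    gammaWeight t (m + 2) (insert 2 (K.image (· + 2))) = t * gammaWeight t m K := by
  have h_cond : (insert 2 (K.image (· + 2)) ⊆ Icc 2 (m + 2) ∧
      NoTwoConsec (insert 2 (K.image (· + 2)))) ↔ K ⊆ Icc 2 m ∧ NoTwoConsec K := by
    have h_le : (∀ a ∈ K, a + 2 ∈ Icc 2 (m + 2)) ↔ ∀ a ∈ K, a ≤ m := by simp
    simp only [NoTwoConsec, forall_mem_insert, forall_mem_image, subset_iff, h_le]
    grind
  have h_card : #(insert 2 (K.image (· + 2))) = #K + 1 := by
    rw [card_insert_of_notMem (by simpa), card_image_of_injective _ (add_left_injective 2)]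
  simp only [gammaWeight, h_cond, h_card]
  split_ifs
  · rw [show m + 2 - 2 * (#K + 1) = m - 2 * #K by omega]
    ring
  · simp

lemma runWeight_ofFn (t : A) {m : ℕ} (v : Fin (m + 2) → α) :
    runWeight t (List.ofFn v) = gammaWeight t m (descents v) := by
  induction m using Nat.strong_induction_on with
  | _ m ih =>
    obtain h | h := lt_or_ge (v 1) (v 0)
    · rw [gammaWeight_eq_zero t (one_mem_descents_iff.2 h) (by simp)]
      rcases m with - | m <;> simp [List.ofFn_succ, runWeight, h.not_ge]
    rcases m with - | m
    · have h_empty : descents v = ∅ := by simp [descents, h]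
      simp [runWeight, gammaWeight, h, h_empty, NoTwoConsec]
    obtain h' | h' := lt_or_ge (v 2) (v 1)
    · have h_run : runWeight t (List.ofFn v) =
          t * runWeight t (List.ofFn (Fin.tail (Fin.tail v))) := by
        simp [List.ofFn_succ, runWeight, h, h'.not_ge, Fin.tail]
      rw [h_run, descents_eq_insert_two h h']
      rcases m with - | m
      · rw [gammaWeight_eq_zero t (mem_insert_self _ _) (by simp)]
        simp [runWeight]
      · rw [ih m (by omega), gammaWeight_insert_two t m (zero_notMem_descents _)]
    · have h_run : runWeight t (List.ofFn v) = (1 + t) * runWeight t (List.ofFn (Fin.tail v)) := by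
        simp [List.ofFn_succ, runWeight, h, h', Fin.tail]
      rw [h_run, ih m m.lt_succ_self, descents_eq_image_succ h, gammaWeight_image_succ]
      exact one_mem_descents_iff.not.2 h'.not_gt

end GammaWeight

section Standardization

/-- `f` is strictly increasing on each fiber of `lev`. -/
def StrictMonoOnFibers {ι α β : Type*} [LT ι] [LT β] (lev : ι → α) (f : ι → β) : Prop :=
  ∀ ⦃i j⦄, i < j → lev i = lev j → f i < f j

instance {ι α β : Type*} [LT ι] [LT β] [Fintype ι] [DecidableLT ι] [DecidableEq α] [DecidableLT β]
    (lev : ι → α) (f : ι → β) : Decidable (StrictMonoOnFibers lev f) :=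
  inferInstanceAs (Decidable (∀ i j, i < j → lev i = lev j → f i < f j))

variable {α A : Type*} [LinearOrder α] [CommRing A] {n m : ℕ}

lemma content_ofFn (v : Fin n → α) : content (List.ofFn v) = ∑ j, Finsupp.single (v j) 1 := by
  rw [content, ← Fin.univ_val_map, ← Multiset.sum_map_singleton (Multiset.map v univ.val),
    map_multiset_sum, Multiset.map_map, Multiset.map_map]
  simp [Finset.sum]

lemma content_ofFn_comp (v : Fin n → α) (σ : Equiv.Perm (Fin n)) :
    content (List.ofFn (v ∘ σ)) = content (List.ofFn v) :=
  content_eq_content_iff.2 (σ.ofFn_comp_perm v)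

lemma comp_eq_of_monotone {lev v : Fin n → α} (hlev : Monotone lev)
    (hv : content (List.ofFn v) = content (List.ofFn lev)) {σ : Equiv.Perm (Fin n)}
    (hσ : Monotone (v ∘ σ)) : v ∘ σ = lev :=
  List.ofFn_injective <|
    (content_eq_content_iff.1 ((content_ofFn_comp v σ).trans hv)).eq_of_pairwise'
      hσ.sortedLE_ofFn.pairwise hlev.sortedLE_ofFn.pairwise

lemma eq_sort_iff_strictMonoOnFibers {lev v : Fin n → α} (hlev : Monotone lev)
    {σ : Equiv.Perm (Fin n)} (hv : v ∘ σ = lev) :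
    σ = Tuple.sort v ↔ StrictMonoOnFibers lev σ := by
  subst hv
  simp [Tuple.eq_sort_iff, hlev, StrictMonoOnFibers]

lemma inv_eq_sort {lev : Fin n → α} (hlev : Monotone lev) {w : Equiv.Perm (Fin n)}
    (hw : StrictMonoOnFibers lev ⇑w⁻¹) : w⁻¹ = Tuple.sort (lev ∘ w) :=
  (eq_sort_iff_strictMonoOnFibers hlev (by ext; simp)).2 hw

lemma descents_comp {lev : Fin (m + 1) → α} (hlev : Monotone lev) {w : Equiv.Perm (Fin (m + 1))}
    (hw : StrictMonoOnFibers lev ⇑w⁻¹) : descents (lev ∘ w) = descents w := by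
  have h_lt (k : Fin m) : lev (w k.succ) < lev (w k.castSucc) ↔ w k.succ < w k.castSucc := by
    refine ⟨hlev.reflect_lt, fun h => (hlev h.le).lt_of_ne fun h_eq => ?_⟩
    have h_inv := hw h h_eq
    simp only [Equiv.Perm.inv_def, Equiv.symm_apply_apply] at h_inv
    exact h_inv.not_gt k.castSucc_lt_succ
  simp [descents, h_lt]

theorem sum_gammaWeight_strictMonoOnFibers (t : A) {lev : Fin (m + 2) → α} (hlev : Monotone lev) :
    ∑ w ∈ {w : Equiv.Perm (Fin (m + 2)) | StrictMonoOnFibers lev ⇑w⁻¹},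
      gammaWeight t m (descents w) = (wordSeries t α).coeff (content (List.ofFn lev)) := by
  rw [coeff_wordSeries]
  refine sum_nbij (fun w => List.ofFn (lev ∘ w)) ?_ ?_ ?_ ?_
  · exact fun w _ => mem_words.2 (content_ofFn_comp lev w)
  · intro w hw w' hw' h
    simp only [coe_filter_univ, Set.mem_ofPred_eq] at hw hw'
    rw [← inv_inj, inv_eq_sort hlev hw, inv_eq_sort hlev hw', List.ofFn_injective h]
  · intro l hl
    have hl := mem_words.1 (mem_coe.1 hl)
    have h_length : l.length = m + 2 := by simpa using (content_eq_content_iff.1 hl).length_eq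
    obtain ⟨v, rfl⟩ : ∃ v : Fin (m + 2) → α, List.ofFn v = l :=
      ⟨_, (List.ofFn_congr h_length l.get).symm.trans l.ofFn_get⟩
    have h_sort := comp_eq_of_monotone hlev hl (Tuple.monotone_sort v)
    refine ⟨(Tuple.sort v)⁻¹, ?_, ?_⟩
    · rw [coe_filter_univ, Set.mem_ofPred_eq, inv_inv,
        ← eq_sort_iff_strictMonoOnFibers hlev h_sort]
    · simp [← h_sort, Function.comp_assoc]
  · intro w hw
    rw [runWeight_ofFn, descents_comp hlev (by simpa using hw)]

end Standardization

section ProdPosition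

variable {ι R : Type*} [LinearOrder ι] [CommRing R]

lemma prod_position_eq_block (t x y : R) (s : Finset ι) :
    ∏ j ∈ s, (y + ((if ∃ i ∈ s, i < j then t else 0) + if ∃ i ∈ s, j < i then 1 else 0) * x) =
      block t x y #s := by
  obtain rfl | ⟨c, hc⟩ := s.eq_empty_or_nonempty
  · simp [block]
  obtain rfl | hs := eq_singleton_or_nontrivial hc
  · simp [block]
  set a := s.min' hs.nonempty
  set b := s.max' hs.nonempty
  have ha : a ∈ s := min'_mem _ _
  have hab : a < b := min'_lt_max'_of_card s (one_lt_card_iff_nontrivial.2 hs)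
  have hb : b ∈ s.erase a := mem_erase.2 ⟨hab.ne', max'_mem _ _⟩
  have h_lt (j) (hj : j ∈ s) : (∃ i ∈ s, i < j) ↔ j ≠ a :=
    ⟨fun ⟨i, hi, hij⟩ => ((min'_le s i hi).trans_lt hij).ne', fun h =>
      ⟨a, ha, (min'_le s j hj).lt_of_ne' h⟩⟩
  have h_gt (j) (hj : j ∈ s) : (∃ i ∈ s, j < i) ↔ j ≠ b :=
    ⟨fun ⟨i, hi, hij⟩ => (hij.trans_le (le_max' s i hi)).ne, fun h =>
      ⟨b, mem_of_mem_erase hb, (le_max' s j hj).lt_of_ne h⟩⟩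
  rw [prod_congr rfl fun j hj => by rw [if_congr (h_lt j hj) rfl rfl, if_congr (h_gt j hj) rfl rfl],
    ← mul_prod_erase s _ ha, ← mul_prod_erase _ _ hb, prod_congr rfl fun j hj => by
      rw [if_pos (ne_of_mem_erase (mem_of_mem_erase hj)), if_pos (ne_of_mem_erase hj)],
    ← card_erase_add_one ha, ← card_erase_add_one hb]
  simp [block, hab.ne, hab.ne']
  ring

end ProdPosition

section ContentSum

variable {α ι A : Type*} [LinearOrder α] [Fintype ι] [CommRing A] {n : ℕ}

lemma coeff_prod_sum_C_mul_X (φ : ι → α) (c : Fin n → ι → A) (d : α →₀ ℕ) :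
    (∏ j, ∑ x, MvPolynomial.C (c j x) * MvPolynomial.X (φ x)).coeff d =
      ∑ g : Fin n → ι with content (List.ofFn (φ ∘ g)) = d, ∏ j, c j (g j) := by
  classical
  rw [prod_univ_sum, Fintype.piFinset_univ, MvPolynomial.coeff_sum, sum_filter]
  refine sum_congr rfl fun g _ => ?_
  have h_X : ∏ j, (MvPolynomial.X (φ (g j)) : MvPolynomial α A) =
      MvPolynomial.monomial (content (List.ofFn (φ ∘ g))) 1 := by
    rw [content_ofFn, MvPolynomial.monomial_sum_one]
    rfl
  rw [prod_mul_distrib, ← map_prod, h_X, MvPolynomial.coeff_C_mul, MvPolynomial.coeff_monomial,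
    mul_ite, mul_one, mul_zero]

end ContentSum

section ExcedanceKey

lemma lt_apply_of_forall_exists_lt {ι : Type*} [LinearOrder ι] [PredOrder ι] [WellFoundedLT ι]
    {P : ι → Prop} {f : ι → ι} (h : ∀ i, P i → f i ≤ i →
      ∃ k < i, ∀ m, k ≤ m → m < i → P m ∧ f m < f i) {i : ι} (hi : P i) : i < f i := by
  induction i using WellFoundedLT.induction with
  | ind i ih =>
    by_contra! h_le
    obtain ⟨k, hki, hk⟩ := h i hi h_le
    have h_pred : Order.pred i < i := Order.pred_lt_of_not_isMin (not_isMin_of_lt hki)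
    obtain ⟨hP, hf⟩ := hk _ (Order.le_pred_of_lt hki) h_pred
    exact (Order.le_of_pred_lt (ih _ h_pred hP)).not_gt (hf.trans_le h_le)

variable {α A : Type*} [LinearOrder α] [CommRing A] {n : ℕ}

/-- The letter of a permutation at `i` in the alphabet in which the values at excedances come
before all other values. The descent set of this word is the statistic DEX of Shareshian and
Wachs. -/
def excKey (σ : Equiv.Perm (Fin n)) (i : Fin n) : Bool ×ₗ Fin n :=
  toLex (decide (σ i ≤ i), σ i)

/-- The word that records, for each value `j` of `σ`, the level of its position and whether that
position is an excedance (`false`) or not (`true`). -/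
def levelWord (lev : Fin n → α) (σ : Equiv.Perm (Fin n)) (j : Fin n) : α ×ₗ Bool :=
  toLex (lev (σ⁻¹ j), decide (j ≤ σ⁻¹ j))

/-- Whether the letter `(c, b)` can occur at `j` in the level word of a derangement. -/
def Admissible (lev : Fin n → α) (j : Fin n) (c : α) : Bool → Prop
  | false => c < lev j ∨ ∃ i < j, lev i = c
  | true => lev j < c ∨ ∃ i > j, lev i = c

instance (lev : Fin n → α) (j : Fin n) (c : α) : DecidablePred (Admissible lev j c)
  | false => inferInstanceAs (Decidable (c < lev j ∨ ∃ i < j, lev i = c))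
  | true => inferInstanceAs (Decidable (lev j < c ∨ ∃ i > j, lev i = c))

variable {lev : Fin n → α} {σ : Equiv.Perm (Fin n)}

lemma eq_sort_iff_strictMonoOnFibers_toLex (hlev : Monotone lev) {g : Fin n → α ×ₗ Bool}
    (hg : ∀ i, (ofLex (g (σ i))).1 = lev i) :
    σ = Tuple.sort g ↔
      StrictMonoOnFibers lev fun i => toLex ((ofLex (g (σ i))).2, σ i) := by
  rw [Tuple.eq_sort_iff']
  refine forall₃_congr fun i j hij => ?_
  change toLex (g (σ i), σ i) < toLex (g (σ j), σ j) ↔ _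
  rw [Prod.Lex.toLex_lt_toLex, Prod.Lex.lt_iff, hg, hg, Prod.Lex.toLex_lt_toLex]
  have h_eq : g (σ i) = g (σ j) ↔ lev i = lev j ∧ (ofLex (g (σ i))).2 = (ofLex (g (σ j))).2 := by
    rw [← hg, ← hg, ← Prod.ext_iff, EmbeddingLike.apply_eq_iff_eq]
  have h_le := hlev hij.le
  grind

lemma lt_apply_of_admissible (hlev : Monotone lev) {b : Fin n → Bool}
    (hσ : StrictMonoOnFibers lev fun i => toLex (b i, σ i))
    (hb : ∀ i, Admissible lev (σ i) (lev i) (b i)) {i : Fin n} (hi : b i = false) : i < σ i := by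
  refine lt_apply_of_forall_exists_lt (P := fun i => b i = false) (fun i hi h_le => ?_) hi
  have h_adm := hb i
  rw [hi] at h_adm
  obtain h_lt | ⟨k, hk, h_eq⟩ := h_adm
  · exact absurd (hlev h_le) h_lt.not_ge
  · refine ⟨k, hk.trans_le h_le, fun m hkm hmi => ?_⟩
    have h_fiber : lev m = lev i := (hlev hmi.le).antisymm (h_eq.ge.trans (hlev hkm))
    simpa [Prod.Lex.toLex_lt_toLex, hi, Bool.lt_iff] using hσ hmi h_fiber

lemma apply_lt_of_admissible (hlev : Monotone lev) {b : Fin n → Bool}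
    (hσ : StrictMonoOnFibers lev fun i => toLex (b i, σ i))
    (hb : ∀ i, Admissible lev (σ i) (lev i) (b i)) {i : Fin n} (hi : b i = true) : σ i < i := by
  refine lt_apply_of_forall_exists_lt (ι := (Fin n)ᵒᵈ) (P := fun i => b i = true) (f := σ)
    (fun i hi h_le => ?_) hi
  have h_adm := hb i
  rw [hi] at h_adm
  obtain h_lt | ⟨k, hk, h_eq⟩ := h_adm
  · exact absurd (hlev h_le) h_lt.not_ge
  · refine ⟨k, hk.trans_le' h_le, fun m hkm hmi => ?_⟩
    have h_fiber : lev i = lev m := (hlev hmi.le).antisymm ((hlev hkm).trans h_eq.le)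
    have h_lt : b m = true ∧ (σ i : Fin n) < σ m := by
      simpa [Prod.Lex.toLex_lt_toLex, hi, Bool.lt_iff] using hσ hmi h_fiber
    exact h_lt

lemma forall_admissible_iff (hlev : Monotone lev) {b : Fin n → Bool}
    (hσ : StrictMonoOnFibers lev fun i => toLex (b i, σ i)) :
    (∀ i, Admissible lev (σ i) (lev i) (b i)) ↔ ∀ i, σ i ≠ i ∧ b i = decide (σ i ≤ i) := by
  refine ⟨fun h i => ?_, fun h i => ?_⟩
  · rcases hi : b i
    · have h_lt := lt_apply_of_admissible hlev hσ h hi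
      simp [h_lt, h_lt.ne']
    · have h_lt := apply_lt_of_admissible hlev hσ h hi
      simp [h_lt.le, h_lt.ne]
  · obtain ⟨h_ne, h_eq⟩ := h i
    rcases h_ne.lt_or_gt with h_lt | h_lt
    · rw [h_eq, decide_eq_true h_lt.le]
      exact .inr ⟨i, h_lt, rfl⟩
    · rw [h_eq, decide_eq_false h_lt.not_ge]
      exact .inr ⟨i, h_lt, rfl⟩

lemma eq_sort_levelWord_iff (hlev : Monotone lev) :
    σ = Tuple.sort (levelWord lev σ) ↔ StrictMonoOnFibers lev (excKey σ) := by
  rw [eq_sort_iff_strictMonoOnFibers_toLex hlev (by simp [levelWord])]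
  simp only [levelWord, Equiv.Perm.inv_def, Equiv.symm_apply_apply]
  rfl

lemma admissible_levelWord (hlev : Monotone lev) (hσ : StrictMonoOnFibers lev (excKey σ))
    (h : ∀ i, σ i ≠ i) (j : Fin n) :
    Admissible lev j (ofLex (levelWord lev σ j)).1 (ofLex (levelWord lev σ j)).2 := by
  obtain ⟨i, rfl⟩ := σ.surjective j
  simpa [levelWord] using (forall_admissible_iff hlev hσ).2 (fun i => ⟨h i, rfl⟩) i

lemma levelWord_sort_of_admissible (hlev : Monotone lev) {g : Fin n → α ×ₗ Bool}
    (hg : content (List.ofFn fun j => (ofLex (g j)).1) = content (List.ofFn lev))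
    (hg' : ∀ j, Admissible lev j (ofLex (g j)).1 (ofLex (g j)).2) :
    (∀ i, Tuple.sort g i ≠ i) ∧ StrictMonoOnFibers lev (excKey (Tuple.sort g)) ∧
      levelWord lev (Tuple.sort g) = g := by
  set σ := Tuple.sort g with hσ
  have h_lev (i) : (ofLex (g (σ i))).1 = lev i :=
    congrFun (comp_eq_of_monotone hlev hg fun i j hij =>
      Prod.Lex.monotone_fst_ofLex (Tuple.monotone_sort g hij)) i
  have h_fibers := (eq_sort_iff_strictMonoOnFibers_toLex hlev h_lev).1 hσ
  have h_adm := (forall_admissible_iff hlev h_fibers).1 fun i => h_lev i ▸ hg' (σ i)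
  have h_word : levelWord lev σ = g := by
    funext j
    obtain ⟨i, rfl⟩ := σ.surjective j
    simp [levelWord, ← (h_adm i).2, ← h_lev]
  exact ⟨fun i => (h_adm i).1, by rw [← eq_sort_levelWord_iff hlev, h_word], h_word⟩

end ExcedanceKey

section DerangementCount

variable {A : Type*} [CommRing A] {n r : ℕ} {lev : Fin n → Fin r}

/-- The weight of the letter `x` at `j` in a level word: `t` for an admissible letter of an
excedance, `1` for any other admissible letter. -/
def letterWeight (t : A) (lev : Fin n → Fin r) (j : Fin n) (x : Fin r ×ₗ Bool) : A :=
  if Admissible lev j (ofLex x).1 (ofLex x).2 then if (ofLex x).2 then 1 else t else 0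

lemma sum_letterWeight_mul_X (t : A) (hlev : Monotone lev) (j : Fin n) :
    ∑ x, MvPolynomial.C (letterWeight t lev j x) * MvPolynomial.X (ofLex x).1 =
      linForm t 0 (lev j) + ((if ∃ i < j, lev i = lev j then MvPolynomial.C t else 0) +
        if ∃ i > j, lev i = lev j then 1 else 0) * MvPolynomial.X (lev j) := by
  have h_coeff (c : Fin r) : (if Admissible lev j c true then 1 else 0) +
      (if Admissible lev j c false then t else 0) =
      (0 + if c < lev j then t else if lev j < c then 1 else 0) + if c = lev j then
        (if ∃ i < j, lev i = lev j then t else 0) + if ∃ i > j, lev i = lev j then 1 else 0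
      else 0 := by
    obtain h | rfl | h := lt_trichotomy c (lev j)
    · have h_not : ¬∃ i > j, lev i = c := fun ⟨i, hi, h_eq⟩ => (hlev hi.le).not_gt (h_eq ▸ h)
      simp [Admissible, h, h.not_gt, h.ne, h_not]
    · simp [Admissible, add_comm]
    · have h_not : ¬∃ i < j, lev i = c := fun ⟨i, hi, h_eq⟩ => (hlev hi.le).not_gt (h_eq ▸ h)
      simp [Admissible, h, h.not_gt, h.ne', h_not]
  rw [← toLex.sum_comp, Fintype.sum_prod_type]
  simp only [letterWeight, Fintype.sum_bool, ofLex_toLex, ← add_mul, ← map_add, if_true,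
    Bool.false_eq_true, if_false, h_coeff]
  simp only [linForm, map_add _ (_ + ite _ _ _), add_mul _ (MvPolynomial.C (ite _ _ _)),
    sum_add_distrib]
  congr 1
  simp [apply_ite (MvPolynomial.C (σ := Fin r))]

lemma blockProd_content (t : A) (hlev : Monotone lev) :
    blockProd t 0 (content (List.ofFn lev)) =
      ∏ j, ∑ x, MvPolynomial.C (letterWeight t lev j x) * MvPolynomial.X (ofLex x).1 := by
  have h_card (a : Fin r) : content (List.ofFn lev) a = #{j | lev j = a} := by
    simp [content_ofFn, Finsupp.finsetSum_apply, Finsupp.single_apply]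
  rw [blockProd, ← prod_fiberwise univ lev]
  refine prod_congr rfl fun a _ => ?_
  rw [h_card, ← prod_position_eq_block]
  refine prod_congr rfl fun j hj => ?_
  obtain rfl : lev j = a := by simpa using hj
  rw [sum_letterWeight_mul_X t hlev]
  simp [and_comm]

theorem sum_derangements_strictMonoOnFibers (t : A) (hlev : Monotone lev) :
    ∑ σ : Equiv.Perm (Fin n) with (∀ i, σ i ≠ i) ∧ StrictMonoOnFibers lev (excKey σ),
      t ^ #{i | i < σ i} = (derangementSeries t 0 r).coeff (content (List.ofFn lev)) := by
  rw [coeff_derangementSeries, blockProd_content t hlev, coeff_prod_sum_C_mul_X]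
  simp only [letterWeight, prod_ite_zero, mem_univ, true_imp_iff]
  rw [← sum_filter, filter_filter]
  refine sum_bij' (fun σ _ => levelWord lev σ) (fun g _ => Tuple.sort g) ?_ ?_ ?_ ?_ ?_
  · intro σ h
    simp only [mem_filter_univ] at h ⊢
    exact ⟨content_ofFn_comp lev σ⁻¹, admissible_levelWord hlev h.2 h.1⟩
  · intro g h
    simp only [mem_filter_univ] at h ⊢
    obtain ⟨h_ne, h_fibers, -⟩ := levelWord_sort_of_admissible hlev h.1 h.2
    exact ⟨h_ne, h_fibers⟩
  · intro σ h
    simp only [mem_filter_univ] at h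
    exact ((eq_sort_levelWord_iff hlev).2 h.2).symm
  · intro g h
    simp only [mem_filter_univ] at h
    exact (levelWord_sort_of_admissible hlev h.1 h.2).2.2
  · intro σ _
    rw [← Equiv.prod_comp σ]
    simp [levelWord, prod_ite]

end DerangementCount

section Level

variable {α : Type*} [LinearOrder α] {n m : ℕ}

/-- The number of elements of `S` that are at most `j`: the level function that is constant exactly
across the positions outside `S`. -/
def level (S : Finset ℕ) (j : Fin n) : Fin (#S + 1) :=
  ⟨#{s ∈ S | s ≤ (j : ℕ)}, Nat.lt_succ_of_le (card_filter_le _ _)⟩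

lemma monotone_level (S : Finset ℕ) : Monotone (level S : Fin n → Fin (#S + 1)) :=
  fun _ _ hij => card_le_card <| monotone_filter_right S fun _ _ hs => hs.trans hij

lemma level_castSucc_eq_level_succ_iff {S : Finset ℕ} (k : Fin m) :
    level S k.castSucc = level S k.succ ↔ (k : ℕ) + 1 ∉ S := by
  have h_card : #{s ∈ S | s ≤ (k : ℕ) + 1} =
      #{s ∈ S | s ≤ (k : ℕ)} + if (k : ℕ) + 1 ∈ S then 1 else 0 := by
    simp only [Nat.le_succ_iff_eq_or_le, Nat.succ_eq_add_one, add_comm #_]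
    rw [filter_or, card_union_of_disjoint, filter_eq']
    · split_ifs <;> simp
    · simp +contextual [disjoint_filter]
  simp [level, h_card]

lemma descents_subset_iff_strictMonoOnFibers {f : Fin (m + 1) → α} (hf : f.Injective)
    {S : Finset ℕ} : descents f ⊆ S ↔ StrictMonoOnFibers (level S) f := by
  have h_descents : descents f ⊆ S ↔
      ∀ k : Fin m, level S k.castSucc = level S k.succ → f k.castSucc < f k.succ := by
    simp only [descents, image_subset_iff, mem_filter_univ, level_castSucc_eq_level_succ_iff,
      ← not_imp_not (a := _ < f (Fin.succ _)), not_not, not_lt,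
      (hf.ne (Fin.castSucc_lt_succ).ne').le_iff_lt]
  rw [h_descents]
  refine ⟨fun h i j => ?_, fun h k => h k.castSucc_lt_succ⟩
  induction j using Fin.induction with
  | zero => exact fun hi => absurd hi (Fin.not_lt_zero i)
  | succ k ih =>
    intro hi h_eq
    have h_le : i ≤ k.castSucc := Fin.le_castSucc_iff.2 hi
    have h_level : level S k.castSucc = level S k.succ :=
      (monotone_level S k.castSucc_le_succ).antisymm (h_eq ▸ monotone_level S h_le)
    obtain rfl | h_lt := h_le.eq_or_lt
    · exact h k h_level
    · exact (ih h_lt (h_eq.trans h_level.symm)).trans (h k h_level)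

end Level

section Inversion

variable {α ι κ A : Type*} [PartialOrder α] [OrderBot α] [LocallyFiniteOrder α] [DecidableLE α]
  [Ring A]

lemma sum_fiber_eq_sum_mu_mul [DecidableEq α] (I : Finset ι) (T : ι → α) (f : ι → A) (a : α) :
    ∑ i ∈ I with T i = a, f i =
      ∑ b ∈ Iic a, IncidenceAlgebra.mu A b a * ∑ i ∈ I with T i ≤ b, f i := by
  refine IncidenceAlgebra.moebius_inversion_bot (fun a => ∑ i ∈ I with T i = a, f i) _
    (fun b => ?_) a
  simp only [sum_filter]
  rw [sum_comm]
  simp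

theorem sum_apply_mul_eq_sum_apply_mul {I : Finset ι} {J : Finset κ} {T : ι → α} {U : κ → α}
    {f : ι → A} {g : κ → A}
    (h : ∀ a, ∑ i ∈ I with T i ≤ a, f i = ∑ j ∈ J with U j ≤ a, g j) (φ : α → A) :
    ∑ i ∈ I, φ (T i) * f i = ∑ j ∈ J, φ (U j) * g j := by
  let _ : DecidableEq α := Classical.decEq α
  have h_fiber (a : α) : ∑ i ∈ I with T i = a, f i = ∑ j ∈ J with U j = a, g j := by
    simp only [sum_fiber_eq_sum_mu_mul, h]
  rw [← sum_fiberwise_of_maps_to (t := I.image T ∪ J.image U) (g := T) (by grind),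
    ← sum_fiberwise_of_maps_to (t := I.image T ∪ J.image U) (g := U) (by grind)]
  refine sum_congr rfl fun a _ => ?_
  calc ∑ i ∈ I with T i = a, φ (T i) * f i
      = φ a * ∑ i ∈ I with T i = a, f i := by
        rw [mul_sum]
        exact sum_congr rfl fun i hi => by rw [(mem_filter.1 hi).2]
    _ = ∑ j ∈ J with U j = a, φ (U j) * g j := by
        rw [h_fiber, mul_sum]
        exact sum_congr rfl fun j hj => by rw [(mem_filter.1 hj).2]

end Inversion

section MajorIndex

variable {n m : ℕ}

lemma sum_descents {α : Type*} [LinearOrder α] (f : Fin (m + 1) → α) :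
    ∑ i ∈ descents f, i = ∑ k : Fin m, if f k.succ < f k.castSucc then (k : ℕ) + 1 else 0 := by
  rw [descents, sum_image (by simp [Set.InjOn, Fin.ext_iff]), sum_filter]

lemma sum_succ_mul_sub {A : Type*} [CommRing A] (e : Fin (m + 1) → A) :
    ∑ k : Fin m, ((k : A) + 1) * (e k.castSucc - e k.succ) =
      ∑ k, e k - (m + 1) * e (Fin.last m) := by
  induction m with
  | zero => simp
  | succ m ih =>
    have h_init := ih fun k => e k.castSucc
    rw [Fin.sum_univ_castSucc, Fin.sum_univ_castSucc e]
    simp only [Fin.val_castSucc, Fin.succ_castSucc, Fin.val_last, Fin.succ_last] at h_init ⊢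
    rw [h_init]
    push_cast
    ring

lemma excKey_injective (σ : Equiv.Perm (Fin n)) : (excKey σ).Injective :=
  fun _ _ h => σ.injective (congrArg (fun x => (ofLex x).2) h)

lemma boole_apply_succ_lt_apply_castSucc (σ : Equiv.Perm (Fin (m + 1))) (k : Fin m) :
    (if σ k.succ < σ k.castSucc then 1 else 0 : ℤ) =
      (if excKey σ k.succ < excKey σ k.castSucc then 1 else 0) +
        ((if k.castSucc < σ k.castSucc then 1 else 0) - if k.succ < σ k.succ then 1 else 0) := by
  have h_ne : σ k.succ ≠ σ k.castSucc := σ.injective.ne k.castSucc_lt_succ.ne'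
  simp only [excKey, Prod.Lex.toLex_lt_toLex, Bool.lt_iff, decide_eq_false_iff_not,
    decide_eq_true_eq, decide_eq_decide, Fin.lt_def, Fin.le_def, Fin.val_succ, Fin.val_castSucc,
    ne_eq, Fin.ext_iff] at h_ne ⊢
  split_ifs <;> omega

lemma sum_descents_eq_sum_descents_excKey_add (σ : Equiv.Perm (Fin (m + 1))) :
    ∑ i ∈ descents σ, i = ∑ i ∈ descents (excKey σ), i + #{i | i < σ i} := by
  have h_exc : ∑ k : Fin m, ((k : ℤ) + 1) * ((if k.castSucc < σ k.castSucc then 1 else 0) -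
      if k.succ < σ k.succ then 1 else 0) = #{i | i < σ i} := by
    rw [sum_succ_mul_sub fun i => if i < σ i then 1 else 0]
    simp [(Fin.le_last _).not_gt]
  rw [sum_descents, sum_descents, ← Nat.cast_inj (R := ℤ), Nat.cast_add, ← h_exc]
  push_cast
  simp only [← mul_boole _ ((_ : ℤ) + 1), boole_apply_succ_lt_apply_castSucc, mul_add,
    sum_add_distrib]

lemma pDES_eq_descents (σ : Equiv.Perm (Fin (m + 1))) : pDES σ = descents σ := by
  ext i
  rcases i with - | i
  · simp [pDES, zero_notMem_descents]
  · simp only [pDES, mem_filter, mem_Icc, succ_mem_descents_iff, Nat.add_sub_cancel]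
    constructor
    · rintro ⟨⟨-, hi⟩, h_lt⟩
      refine ⟨hi, ?_⟩
      simpa [pval, hi, Nat.le_of_lt hi] using h_lt
    · rintro ⟨hi, h_lt⟩
      refine ⟨⟨i.succ_pos, hi⟩, ?_⟩
      simpa [pval, hi, Nat.le_of_lt hi] using h_lt

lemma pexc_eq_card (σ : Equiv.Perm (Fin n)) : pexc σ = #{i | i < σ i} := by
  symm
  refine card_bij (fun i _ => (i : ℕ) + 1) ?_ (by simp [Fin.ext_iff]) ?_
  · intro i hi
    rw [mem_filter_univ, Fin.lt_def] at hi
    simp [pval, Nat.succ_le_iff, hi]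
  · intro i hi
    simp only [mem_filter, mem_Icc] at hi
    rw [pval, dif_pos hi.1] at hi
    refine ⟨⟨i - 1, by omega⟩, ?_, by simp; omega⟩
    rw [mem_filter_univ, Fin.lt_def]
    dsimp only
    omega

end MajorIndex

section GammaExpansion

theorem sum_derangements_eq_sum_gammaWeight {A : Type*} [CommRing A] {m : ℕ} (t : A)
    (φ : Finset ℕ → A) :
    ∑ σ : Equiv.Perm (Fin (m + 2)) with ∀ i, σ i ≠ i,
        φ (descents (excKey σ)) * t ^ #{i | i < σ i} =
      ∑ w : Equiv.Perm (Fin (m + 2)), φ (descents ⇑w⁻¹) * gammaWeight t m (descents w) := by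
  refine sum_apply_mul_eq_sum_apply_mul (fun S => ?_) φ
  simp only [filter_filter,
    descents_subset_iff_strictMonoOnFibers (excKey_injective _),
    descents_subset_iff_strictMonoOnFibers (Equiv.injective _)]
  rw [sum_derangements_strictMonoOnFibers t (monotone_level S),
    sum_gammaWeight_strictMonoOnFibers t (monotone_level S), wordSeries_eq_derangementSeries]

lemma sum_mul_gammaWeight {ι A : Type*} [CommRing A] (s : Finset ι) (f : ι → A)
    (K : ι → Finset ℕ) (t : A) (m : ℕ) :
    ∑ i ∈ s, f i * gammaWeight t m (K i) =
      ∑ k ∈ range (m / 2 + 1),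
        (∑ i ∈ s with K i ⊆ Icc 2 m ∧ NoTwoConsec (K i) ∧ #(K i) = k, f i) *
          t ^ (k + 1) * (1 + t) ^ (m - 2 * k) := by
  simp only [gammaWeight, mul_ite, mul_zero]
  rw [← sum_filter, ← sum_fiberwise_of_maps_to (g := fun i => #(K i)) (t := range (m / 2 + 1))]
  · refine sum_congr rfl fun k _ => ?_
    rw [sum_mul, sum_mul, filter_filter]
    simp only [and_assoc]
    refine sum_congr rfl fun i hi => ?_
    rw [(mem_filter.1 hi).2.2.2, mul_assoc]
  · intro i hi
    have h_card := two_mul_card_le_of_noTwoConsec (mem_filter.1 hi).2.1 (mem_filter.1 hi).2.2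
    rw [mem_range]
    omega

end GammaExpansion

end DerangementGamma

open DerangementGamma

/-- γ-expansion of the `q,t`-derangement polynomial:
`d_n(q,t) = Σ_k ξ⁰_{n,k}(q) t^{k+1} (1+t)^{n-2-2k}` with
`ξ⁰_{n,k}(q) = Σ q^{maj(σ⁻¹)}` over all `σ ∈ S_n` with `DES(σ) ⊆ [2,n-2]`,
no two consecutive descents, and exactly `k` descents. -/
theorem dpoly_gamma_maj (n : ℕ) (hn : 2 ≤ n) :
    dpoly n = ∑ k ∈ Finset.range ((n - 2) / 2 + 1),
      Polynomial.C (∑ σ ∈ Finset.univ.filter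
            (fun σ : Equiv.Perm (Fin n) =>
              pDES σ ⊆ Finset.Icc 2 (n - 2) ∧ NoTwoConsec (pDES σ) ∧ (pDES σ).card = k),
          (Polynomial.X : Polynomial ℤ) ^ pmaj (σ⁻¹)) *
        Polynomial.X ^ (k + 1) * (1 + Polynomial.X) ^ (n - 2 - 2 * k) := by
  obtain ⟨m, rfl⟩ : ∃ m, n = m + 2 := ⟨n - 2, by omega⟩
  calc dpoly (m + 2)
      = ∑ σ : Equiv.Perm (Fin (m + 2)) with ∀ i, σ i ≠ i,
          C ((X : ℤ[X]) ^ ∑ i ∈ descents (excKey σ), i) * X ^ #{i | i < σ i} := by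
        simp [dpoly, pmaj, pDES_eq_descents, pexc_eq_card, sum_descents_eq_sum_descents_excKey_add]
    _ = ∑ w : Equiv.Perm (Fin (m + 2)),
          C ((X : ℤ[X]) ^ ∑ i ∈ descents ⇑w⁻¹, i) * gammaWeight X m (descents w) :=
        sum_derangements_eq_sum_gammaWeight X fun T => C (X ^ ∑ i ∈ T, i)
    _ = _ := by
        simp only [sum_mul_gammaWeight, map_sum, pmaj, pDES_eq_descents, Nat.add_sub_cancel]
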